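/- arXiv:math/0505298 — 3 statements merged into one kernel-verified Lean document; each statement's English description precedes it below -/
import Mathlib

section
/- For every real x ≥ 2, the prime counting function satisfies the exact identity π(x) = Li(x) + R(x)·x/log x − ∫₂^x R(y)·(log y − 1)/(log y)² dy + 2, where the integrand (log y − 1)/(log y)² dy is the differential d(y/log y). -/
/-- The prime counting function `π(x)`: the number of primes `p ≤ x`, as a real number. -/
noncomputable def primePi (x : ℝ) : ℝ :=
  (((Finset.range (⌊x⌋₊ + 1)).filter Nat.Prime).card : ℝ)

/-- The logarithmic integral `Li(x) = ∫₂^x dt / log t`. -/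
noncomputable def Li (x : ℝ) : ℝ := ∫ t in (2:ℝ)..x, 1 / Real.log t

/-- `R(x) = ∑_{p ≤ x, p prime} (log p)/p − log x`. -/
noncomputable def RFun (x : ℝ) : ℝ :=
  (∑ p ∈ (Finset.range (⌊x⌋₊ + 1)).filter Nat.Prime, Real.log p / p) - Real.log x

/-!
Abel summation of `f n · c n`, followed by an integration by parts against a smooth approximation
`M` of the summatory function of `c`, expresses `∑ f n · c n` through `∫ f · M'` and the error term
of the approximation. Here `c` is `(log p) / p` on primes, `M = log` has error term `R`, and
`f t = t / log t` turns each `(log p) / p` into `1`. Then `f · M' = 1 / log`, and the constant `2`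
is the boundary term `f 2 · log 2`.
-/

open MeasureTheory

theorem sum_mul_eq_integral_mul_add_sub_integral_mul_error {𝕜 : Type*} [RCLike 𝕜]
    (c : ℕ → 𝕜) {f f' M m : ℝ → 𝕜} {a b : ℝ} (ha : 0 ≤ a) (hab : a ≤ b)
    (hf : ∀ t ∈ Set.Icc a b, HasDerivAt f (f' t) t) (hf' : IntegrableOn f' (Set.Icc a b))
    (hM : ∀ t ∈ Set.Icc a b, HasDerivAt M (m t) t) (hm : IntegrableOn m (Set.Icc a b)) :
    ∑ k ∈ Finset.Ioc ⌊a⌋₊ ⌊b⌋₊, f k * c k =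
      (∫ t in a..b, f t * m t)
        + f b * (∑ k ∈ Finset.Icc 0 ⌊b⌋₊, c k - M b) - f a * (∑ k ∈ Finset.Icc 0 ⌊a⌋₊, c k - M a)
        - ∫ t in a..b, f' t * (∑ k ∈ Finset.Icc 0 ⌊t⌋₊, c k - M t) := by
  have hderiv : Set.EqOn f' (deriv f) (Set.Icc a b) := fun t ht ↦ (hf t ht).deriv.symm
  have habel : ∑ k ∈ Finset.Ioc ⌊a⌋₊ ⌊b⌋₊, f k * c k =
      f b * ∑ k ∈ Finset.Icc 0 ⌊b⌋₊, c k - f a * ∑ k ∈ Finset.Icc 0 ⌊a⌋₊, c k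
        - ∫ t in a..b, f' t * ∑ k ∈ Finset.Icc 0 ⌊t⌋₊, c k := by
    rw [sum_mul_eq_sub_sub_integral_mul c ha hab (fun t ht ↦ (hf t ht).differentiableAt)
      (hf'.congr_fun hderiv measurableSet_Icc), intervalIntegral.integral_of_le hab]
    congr 1
    refine setIntegral_congr_fun measurableSet_Ioc fun t ht ↦ ?_
    simp only [hderiv (Set.Ioc_subset_Icc_self ht)]
  have hparts : ∫ t in a..b, f t * m t = f b * M b - f a * M a - ∫ t in a..b, f' t * M t :=
    intervalIntegral.integral_mul_deriv_eq_deriv_mul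
      (fun t ht ↦ hf t (Set.uIcc_of_le hab ▸ ht)) (fun t ht ↦ hM t (Set.uIcc_of_le hab ▸ ht))
      ((intervalIntegrable_iff_integrableOn_Icc_of_le hab).2 hf')
      ((intervalIntegrable_iff_integrableOn_Icc_of_le hab).2 hm)
  have hsum_int : IntervalIntegrable (fun t ↦ f' t * ∑ k ∈ Finset.Icc 0 ⌊t⌋₊, c k) volume a b :=
    (intervalIntegrable_iff_integrableOn_Icc_of_le hab).2 (integrableOn_mul_sum_Icc c ha hf')
  have hM_cont : ContinuousOn M (Set.Icc a b) :=
    fun t ht ↦ (hM t ht).continuousAt.continuousWithinAt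
  have hM_int : IntervalIntegrable (fun t ↦ f' t * M t) volume a b :=
    (intervalIntegrable_iff_integrableOn_Icc_of_le hab).2
      (hf'.mul_continuousOn hM_cont isCompact_Icc)
  simp only [mul_sub, intervalIntegral.integral_sub hsum_int hM_int]
  rw [habel, hparts]
  ring

theorem sum_filter_prime_range_eq_add_sum_Ioc {A : Type*} [AddCommMonoid A] (g : ℕ → A) {n : ℕ}
    (hn : 2 ≤ n) :
    ∑ p ∈ (Finset.range (n + 1)).filter Nat.Prime, g p =
      g 2 + ∑ k ∈ Finset.Ioc 2 n, if k.Prime then g k else 0 := by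
  have hsplit : (Finset.range (n + 1)).filter Nat.Prime =
      insert 2 ((Finset.Ioc 2 n).filter Nat.Prime) := by
    ext p
    have htwo_le : p.Prime → 2 ≤ p := Nat.Prime.two_le
    grind [Nat.prime_two]
  rw [hsplit, Finset.sum_insert (by simp), Finset.sum_filter]

theorem sum_Icc_ite_prime_log_div_sub_log (y : ℝ) :
    (∑ k ∈ Finset.Icc 0 ⌊y⌋₊, if k.Prime then Real.log k / k else 0) - Real.log y = RFun y := by
  rw [RFun, Finset.sum_filter, Nat.range_succ_eq_Icc_zero]

theorem RFun_two : RFun 2 = -(Real.log 2 / 2) := by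
  rw [RFun, Nat.floor_ofNat, sum_filter_prime_range_eq_add_sum_Ioc _ le_rfl]
  simp only [Finset.Ioc_self, Finset.sum_empty, Nat.cast_ofNat]
  ring

theorem sum_prime_mul_log_div_eq_integral_add_RFun {f f' : ℝ → ℝ} {x : ℝ} (hx : 2 ≤ x)
    (hf : ∀ t ∈ Set.Icc 2 x, HasDerivAt f (f' t) t) (hf' : IntegrableOn f' (Set.Icc 2 x)) :
    ∑ p ∈ (Finset.range (⌊x⌋₊ + 1)).filter Nat.Prime, f p * (Real.log p / p) =
      (∫ t in 2..x, f t / t) + RFun x * f x - (∫ t in 2..x, RFun t * f' t)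
        + f 2 * Real.log 2 := by
  have hne : ∀ t ∈ Set.Icc 2 x, t ≠ 0 := fun t ht ↦ (two_pos.trans_le ht.1).ne'
  have habel := sum_mul_eq_integral_mul_add_sub_integral_mul_error
    (fun k ↦ if k.Prime then Real.log k / k else 0) zero_le_two hx hf hf'
    (fun t ht ↦ Real.hasDerivAt_log (hne t ht))
    (continuousOn_inv₀.mono hne).integrableOn_Icc
  rw [sum_Icc_ite_prime_log_div_sub_log 2] at habel
  simp only [sum_Icc_ite_prime_log_div_sub_log, RFun_two, mul_ite, mul_zero, Nat.floor_ofNat,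
    ← div_eq_mul_inv] at habel
  rw [sum_filter_prime_range_eq_add_sum_Ioc _ (Nat.le_floor hx), habel, Nat.cast_ofNat]
  simp only [mul_comm (RFun _)]
  ring

theorem primePi_eq_sum_div_log_mul_log_div (x : ℝ) :
    primePi x = ∑ p ∈ (Finset.range (⌊x⌋₊ + 1)).filter Nat.Prime,
      (p / Real.log p) * (Real.log p / p) := by
  rw [primePi, Finset.cast_card]
  refine Finset.sum_congr rfl fun p hp ↦ ?_
  have hp_one : (1 : ℝ) < p := mod_cast (Finset.mem_filter.1 hp).2.one_lt
  have hlog : Real.log p ≠ 0 := (Real.log_pos hp_one).ne'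
  field_simp

theorem hasDerivAt_div_log {t : ℝ} (ht : Real.log t ≠ 0) :
    HasDerivAt (fun s ↦ s / Real.log s) ((Real.log t - 1) / Real.log t ^ 2) t := by
  have ht_ne : t ≠ 0 := (Real.log_ne_zero.1 ht).1
  simpa only [id, one_mul, mul_inv_cancel₀ ht_ne] using
    (hasDerivAt_id t).fun_div (Real.hasDerivAt_log ht_ne) ht

theorem continuousOn_log_sub_one_div_log_sq :
    ContinuousOn (fun t ↦ (Real.log t - 1) / Real.log t ^ 2) {t | Real.log t ≠ 0} := by
  have hlog : ContinuousOn Real.log {t | Real.log t ≠ 0} :=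
    Real.continuousOn_log.mono fun t ht ↦ (Real.log_ne_zero.1 ht).1
  exact (hlog.sub continuousOn_const).div (hlog.pow 2) fun t ht ↦ pow_ne_zero 2 ht

theorem integral_div_log_div_eq_Li (x : ℝ) : ∫ t in 2..x, t / Real.log t / t = Li x := by
  refine intervalIntegral.integral_congr fun t _ ↦ ?_
  rcases eq_or_ne t 0 with rfl | ht
  · simp
  · simp only [div_right_comm, div_self ht]

/-- The exact identity
`π(x) = Li(x) + R(x)·x/log x − ∫₂^x R(y)·(log y − 1)/(log y)² dy + 2` for `x ≥ 2`. -/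
theorem primePi_eq_Li_add_RFun (x : ℝ) (hx : 2 ≤ x) :
    primePi x = Li x + RFun x * x / Real.log x
      - (∫ y in (2:ℝ)..x, RFun y * (Real.log y - 1) / (Real.log y) ^ 2) + 2 := by
  have hlog : ∀ t ∈ Set.Icc 2 x, Real.log t ≠ 0 := fun t ht ↦
    (Real.log_pos (one_lt_two.trans_le ht.1)).ne'
  have habel := sum_prime_mul_log_div_eq_integral_add_RFun hx
    (fun t ht ↦ hasDerivAt_div_log (hlog t ht))
    (continuousOn_log_sub_one_div_log_sq.mono hlog).integrableOn_Icc
  rw [← primePi_eq_sum_div_log_mul_log_div, integral_div_log_div_eq_Li,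
    div_mul_cancel₀ 2 (hlog 2 ⟨le_rfl, hx⟩)] at habel
  simpa only [mul_div_assoc] using habel
end

section
/- The function R(x) = Σ_{p ≤ x, p prime} (log p)/p − log x converges as x → ∞, and its limit equals −γ − Σ_{k ≥ 2} Σ_{p prime} (log p)/p^k, where γ is the Euler–Mascheroni constant. -/
/-!
The Dirichlet series of `Λ(n) / n` is `-ζ'/ζ(s + 1) = 1 / s - γ + s * H(s)`, where `H` extends
continuously to `0 ≤ re s` because `ζ` has no zeros on the line `re s = 1`. By Abel summation, `H`
is the Laplace transform of `a(u) = ∑_{n ≤ e^u} Λ(n) / n - u + γ`, which is bounded by Chebyshev's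
estimate. Averaging `a` against translates of a nonnegative kernel whose Fourier transform has
compact support only sees `H` on a compact piece of the imaginary axis, so the averages tend to
`0` by the Riemann–Lebesgue lemma. As `a(u) + u` is monotone, `a` cannot drop quickly, and
narrowing the kernel forces `a` itself to tend to `0`. The proper prime powers contribute a
convergent series, which accounts for the double sum in the limit.
-/

open MeasureTheory Filter Topology Set Complex
open scoped FourierTransform ComplexConjugate Convolution ArithmeticFunction.vonMangoldt

/-! ### A nonnegative kernel with compactly supported Fourier side -/

theorem fourier_conj_comp_neg (f : ℝ → ℂ) (ξ : ℝ) :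
    𝓕 (fun y ↦ conj (f (-y))) ξ = conj (𝓕 f ξ) := by
  rw [Real.fourier_real_eq, Real.fourier_real_eq, ← integral_conj, ← integral_neg_eq_self]
  simp [Circle.smul_def]

theorem fourier_convolution_conj_comp_neg {f : ℝ → ℂ} (hf : Integrable f) (ξ : ℝ) :
    𝓕 (f ⋆[ContinuousLinearMap.mul ℂ ℂ] fun y ↦ conj (f (-y))) ξ = (‖𝓕 f ξ‖ ^ 2 : ℝ) := by
  have hf_neg : Integrable fun y ↦ conj (f (-y)) :=
    (LinearIsometryEquiv.integrable_comp_iff conjLIE).2 hf.comp_neg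
  rw [Real.fourier_mul_convolution_eq hf hf_neg, fourier_conj_comp_neg, mul_conj, normSq_eq_norm_sq]

theorem exists_schwartzMap_hasCompactSupport_fourier_zero_ne_zero :
    ∃ f : SchwartzMap ℝ ℂ, HasCompactSupport f ∧ 𝓕 f 0 ≠ 0 := by
  let bump : ContDiffBump (0 : ℝ) := default
  have hsupp : HasCompactSupport fun x ↦ (bump x : ℂ) :=
    bump.hasCompactSupport.comp_left ofReal_zero
  refine ⟨hsupp.toSchwartzMap (ofRealCLM.contDiff.comp bump.contDiff), hsupp, ?_⟩
  have hint : ∫ x, (bump x : ℂ) ≠ 0 := by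
    rw [integral_complex_ofReal]
    exact_mod_cast (bump.integral_pos (μ := volume)).ne'
  rw [SchwartzMap.fourier_coe, Real.fourier_real_eq]
  simpa using! hint

theorem exists_hasCompactSupport_fourier_nonneg :
    ∃ (φ : ℝ → ℂ) (K : ℝ → ℝ), Continuous φ ∧ HasCompactSupport φ ∧ (∀ ξ, 𝓕 φ ξ = K ξ) ∧
      (∀ ξ, 0 ≤ K ξ) ∧ Integrable K ∧ 0 < ∫ ξ, K ξ := by
  obtain ⟨f, hsupp, hf_zero⟩ := exists_schwartzMap_hasCompactSupport_fourier_zero_ne_zero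
  have hsupp_neg : HasCompactSupport fun y ↦ conj (f (-y)) :=
    (hsupp.comp_homeomorph (Homeomorph.neg ℝ)).comp_left (map_zero _)
  have hK : Integrable fun ξ ↦ ‖𝓕 f ξ‖ ^ 2 := ((𝓕 f).memLp 2).integrable_norm_pow two_ne_zero
  refine ⟨f ⋆[ContinuousLinearMap.mul ℂ ℂ] fun y ↦ conj (f (-y)), fun ξ ↦ ‖𝓕 f ξ‖ ^ 2, ?_, ?_,
    fourier_convolution_conj_comp_neg f.integrable, fun ξ ↦ sq_nonneg _, hK, ?_⟩
  · have hf_neg : Continuous fun y ↦ conj (f (-y)) := by fun_prop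
    exact hsupp.continuous_convolution_left (ContinuousLinearMap.mul ℂ ℂ) f.continuous
      hf_neg.locallyIntegrable
  · exact hsupp.convolution _ hsupp_neg
  · exact integral_pos_of_integrable_nonneg_nonzero (x := 0) (by fun_prop) hK
      (fun ξ ↦ sq_nonneg _) (by positivity)

/-! ### Boundary values of Laplace transforms -/

/-- The one-sided Laplace transform `s ↦ ∫ u > 0, a u * exp (-s * u)`, with the junk value `0` of
the Bochner integral where the integrand is not integrable. -/
noncomputable def laplaceTransform (a : ℝ → ℂ) (s : ℂ) : ℂ :=
  ∫ u in Ioi (0 : ℝ), a u * cexp (-s * u)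

theorem integrableOn_mul_cexp_neg_mul {a : ℝ → ℂ} {M : ℝ} {s : ℂ}
    (ha : AEStronglyMeasurable a (volume.restrict (Ioi 0))) (hM : ∀ u, 0 < u → ‖a u‖ ≤ M)
    (hs : 0 < s.re) : IntegrableOn (fun u : ℝ ↦ a u * cexp (-s * u)) (Ioi 0) :=
  (integrableOn_exp_mul_complex_Ioi (by simpa using hs) 0).bdd_mul (c := M) ha
    (ae_restrict_of_forall_mem measurableSet_Ioi hM)

theorem laplaceTransform_comp_mul_left (a : ℝ → ℂ) {c : ℝ} (hc : 0 < c) (s : ℂ) :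
    laplaceTransform (fun u ↦ a (c * u)) s = (c⁻¹ : ℝ) * laplaceTransform a (s / c) := by
  have hscale := integral_comp_mul_left_Ioi (fun u : ℝ ↦ a u * cexp (-(s / c) * u)) 0 hc
  rw [mul_zero, real_smul] at hscale
  rw [laplaceTransform, laplaceTransform, ← hscale]
  have hc_ne : (c : ℂ) ≠ 0 := mod_cast hc.ne'
  congr! 4 with u
  push_cast
  field_simp

theorem fourier_indicator_Ioi_mul_cexp (a : ℝ → ℂ) (s : ℂ) (y : ℝ) :
    𝓕 ((Ioi 0).indicator fun u : ℝ ↦ a u * cexp (-s * u)) y =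
      laplaceTransform a (s + 2 * Real.pi * y * I) := by
  rw [Real.fourier_real_eq, laplaceTransform, ← integral_indicator measurableSet_Ioi]
  congr 1 with u
  by_cases hu : u ∈ Ioi 0
  · rw [indicator_of_mem hu, indicator_of_mem hu, Circle.smul_def, Real.fourierChar_apply,
      smul_eq_mul, mul_left_comm, ← Complex.exp_add]
    congr 2
    push_cast
    ring
  · simp [hu]

theorem fourier_fourierChar_mul_smul (φ : ℝ → ℂ) (T u : ℝ) :
    𝓕 (fun y ↦ Real.fourierChar (T * y) • φ y) u = 𝓕 φ (u - T) := by
  simp only [Real.fourier_real_eq, smul_smul, ← AddChar.map_add_eq_mul]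
  congr! 4 with y
  ring

theorem integral_fourier_mul_eq {f g : ℝ → ℂ} (hf : Integrable f) (hg : Integrable g) :
    ∫ ξ, 𝓕 f ξ * g ξ = ∫ x, f x * 𝓕 g x := by
  simpa using! VectorFourier.integral_fourierIntegral_smul_eq_flip (L := innerₗ ℝ)
    Real.continuous_fourierChar continuous_inner hf hg

theorem integral_Ioi_mul_fourier_eq_integral_laplaceTransform {a φ : ℝ → ℂ} {s : ℂ}
    (ha : IntegrableOn (fun u : ℝ ↦ a u * cexp (-s * u)) (Ioi 0)) (hφ : Integrable φ) :
    ∫ u in Ioi (0 : ℝ), a u * cexp (-s * u) * 𝓕 φ u =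
      ∫ y : ℝ, laplaceTransform a (s + 2 * Real.pi * y * I) * φ y := by
  simp_rw [← fourier_indicator_Ioi_mul_cexp]
  rw [integral_fourier_mul_eq (ha.integrable_indicator measurableSet_Ioi) hφ,
    ← integral_indicator measurableSet_Ioi]
  simp_rw [indicator_mul_left]

section BoundaryValue

variable {a φ : ℝ → ℂ} {M : ℝ} {H : ℂ → ℂ}

theorem tendsto_integral_mul_cexp_neg_mul {g : ℝ → ℂ}
    (ha : AEStronglyMeasurable a (volume.restrict (Ioi 0))) (hM : ∀ u, 0 < u → ‖a u‖ ≤ M)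
    (hg : Integrable g) :
    Tendsto (fun ε : ℝ ↦ ∫ u in Ioi (0 : ℝ), a u * cexp (-ε * u) * g u) (𝓝[>] 0)
      (𝓝 (∫ u in Ioi (0 : ℝ), a u * g u)) := by
  refine tendsto_integral_filter_of_dominated_convergence (fun u ↦ M * ‖g u‖) ?_ ?_
    (hg.norm.const_mul M).integrableOn ?_
  · exact .of_forall fun ε ↦ (ha.mul (by fun_prop)).mul hg.aestronglyMeasurable.restrict
  · filter_upwards [self_mem_nhdsWithin] with ε (hε : 0 < ε)
    refine ae_restrict_of_forall_mem measurableSet_Ioi fun u (hu : 0 < u) ↦ ?_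
    have hexp : ‖cexp (-ε * u)‖ ≤ 1 := by
      simpa [Complex.norm_exp] using (mul_pos hε hu).le
    rw [norm_mul, norm_mul]
    have := hM u hu
    gcongr
    nlinarith [norm_nonneg (a u)]
  · refine .of_forall fun u ↦ Tendsto.mono_left ?_ nhdsWithin_le_nhds
    have : Continuous fun ε : ℝ ↦ a u * cexp (-ε * u) * g u := by fun_prop
    simpa using this.tendsto 0

theorem tendsto_integral_boundary (hH : ContinuousOn H {s | 0 ≤ s.re}) (hφ : Continuous φ)
    (hφ_supp : HasCompactSupport φ) :
    Tendsto (fun ε : ℝ ↦ ∫ y : ℝ, H (ε + 2 * Real.pi * y * I) * φ y) (𝓝[>] 0)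
      (𝓝 (∫ y : ℝ, H (2 * Real.pi * y * I) * φ y)) := by
  have hcont : ContinuousOn (fun ε : ℝ ↦ ∫ y : ℝ, H (ε + 2 * Real.pi * y * I) * φ y) (Ici 0) := by
    refine continuousOn_integral_of_compact_support hφ_supp ?_
      fun ε y _ hy ↦ by simp [image_eq_zero_of_notMem_tsupport hy]
    refine .mul (hH.comp (by fun_prop) ?_) (by fun_prop)
    rintro ⟨ε, y⟩ ⟨hε, -⟩
    simpa using hε
  simpa using (hcont 0 self_mem_Ici).tendsto.mono_left (nhdsWithin_mono 0 Ioi_subset_Ici_self)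

theorem integral_Ioi_mul_fourier_eq_integral_boundary
    (ha : AEStronglyMeasurable a (volume.restrict (Ioi 0))) (hM : ∀ u, 0 < u → ‖a u‖ ≤ M)
    (hH : ContinuousOn H {s | 0 ≤ s.re}) (haH : ∀ s : ℂ, 0 < s.re → laplaceTransform a s = H s)
    (hφ : Continuous φ) (hφ_supp : HasCompactSupport φ) (hφ_fourier : Integrable (𝓕 φ)) :
    ∫ u in Ioi (0 : ℝ), a u * 𝓕 φ u = ∫ y : ℝ, H (2 * Real.pi * y * I) * φ y := by
  refine tendsto_nhds_unique (tendsto_integral_mul_cexp_neg_mul ha hM hφ_fourier)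
    ((tendsto_integral_boundary hH hφ hφ_supp).congr' ?_)
  filter_upwards [self_mem_nhdsWithin] with ε (hε : 0 < ε)
  rw [integral_Ioi_mul_fourier_eq_integral_laplaceTransform
    (integrableOn_mul_cexp_neg_mul ha hM (by simpa using hε))
    (hφ.integrable_of_hasCompactSupport hφ_supp)]
  congr! 3 with y
  exact (haH _ (by simpa using hε)).symm

theorem tendsto_integral_Ioi_mul_fourier_sub
    (ha : AEStronglyMeasurable a (volume.restrict (Ioi 0))) (hM : ∀ u, 0 < u → ‖a u‖ ≤ M)
    (hH : ContinuousOn H {s | 0 ≤ s.re}) (haH : ∀ s : ℂ, 0 < s.re → laplaceTransform a s = H s)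
    (hφ : Continuous φ) (hφ_supp : HasCompactSupport φ) (hφ_fourier : Integrable (𝓕 φ)) :
    Tendsto (fun T ↦ ∫ u in Ioi (0 : ℝ), a u * 𝓕 φ (u - T)) atTop (𝓝 0) := by
  -- Translating `𝓕 φ` by `T` modulates `φ`, which turns the boundary integral into a Fourier
  -- transform evaluated at `-T`; the Riemann–Lebesgue lemma then gives the limit.
  have hmodulate (T : ℝ) : ∫ u in Ioi (0 : ℝ), a u * 𝓕 φ (u - T) =
      𝓕 (fun y : ℝ ↦ H (2 * Real.pi * y * I) * φ y) (-T) := by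
    have hsupp : HasCompactSupport fun y ↦ Real.fourierChar (T * y) • φ y := hφ_supp.smul_left
    have hfourier : Integrable (𝓕 fun y ↦ Real.fourierChar (T * y) • φ y) := by
      simpa only [funext (fourier_fourierChar_mul_smul φ T)] using hφ_fourier.comp_sub_right T
    simp_rw [← fourier_fourierChar_mul_smul]
    rw [integral_Ioi_mul_fourier_eq_integral_boundary ha hM hH haH (by fun_prop) hsupp hfourier,
      Real.fourier_real_eq]
    congr! 2 with y
    rw [mul_smul_comm, mul_neg, neg_neg, mul_comm y]
  simp_rw [hmodulate]
  exact (Real.zero_at_infty_fourier _).comp (tendsto_neg_atTop_atBot.mono_right atBot_le_cocompact)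

theorem tendsto_integral_indicator_Ioi_comp_mul {a K : ℝ → ℝ} (ha : Measurable a)
    (hM : ∀ u, 0 < u → |a u| ≤ M) (hH : ContinuousOn H {s | 0 ≤ s.re})
    (haH : ∀ s : ℂ, 0 < s.re → laplaceTransform (fun u ↦ a u) s = H s)
    (hφ : Continuous φ) (hφ_supp : HasCompactSupport φ) (hφK : ∀ ξ, 𝓕 φ ξ = K ξ)
    (hK : Integrable K) {c : ℝ} (hc : 0 < c) :
    Tendsto (fun T ↦ ∫ v, (Ioi 0).indicator a (c * (T + v)) * K v) atTop (𝓝 0) := by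
  have hlaplace (s : ℂ) (hs : 0 < s.re) :
      laplaceTransform (fun u ↦ a (c * u)) s = (c⁻¹ : ℝ) * H (s / c) := by
    rw [laplaceTransform_comp_mul_left (fun u ↦ (a u : ℂ)) hc, haH]
    simpa using div_pos hs hc
  have hH_scaled : ContinuousOn (fun s ↦ (c⁻¹ : ℝ) * H (s / c)) {s | 0 ≤ s.re} :=
    continuousOn_const.mul <| hH.comp (by fun_prop) fun s hs ↦ by simpa using div_nonneg hs hc.le
  have hshift (T : ℝ) : ∫ u in Ioi (0 : ℝ), (a (c * u) : ℂ) * 𝓕 φ (u - T) =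
      (∫ v, (Ioi 0).indicator a (c * (T + v)) * K v : ℝ) := by
    rw [← integral_complex_ofReal, ← integral_indicator measurableSet_Ioi]
    conv_rhs => rw [← integral_sub_right_eq_self _ T]
    congr 1 with u
    by_cases hu : 0 < u <;> simp [hu, hφK, hc, indicator]
  have ha_scaled : Measurable fun u ↦ (a (c * u) : ℂ) := by fun_prop
  have hφ_fourier : Integrable (𝓕 φ) := by
    rw [funext hφK]
    exact hK.ofReal
  have hlim := tendsto_integral_Ioi_mul_fourier_sub ha_scaled.aestronglyMeasurable
    (fun u hu ↦ by simpa using hM (c * u) (mul_pos hc hu)) hH_scaled hlaplace hφ hφ_supp hφ_fourier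
  simp_rw [hshift] at hlim
  exact_mod_cast (continuous_re.tendsto 0).comp hlim

end BoundaryValue

/-! ### A Tauberian theorem for slowly decreasing functions -/

theorem mul_integral_le_integral_mul_add {α : Type*} [MeasurableSpace α] {μ : Measure α}
    {g K : α → ℝ} {S : Set α} {c M : ℝ} (hS : MeasurableSet S) (hg : AEStronglyMeasurable g μ)
    (hgM : ∀ x, |g x| ≤ M) (hcg : ∀ x ∈ S, c ≤ g x) (hK_nonneg : ∀ x, 0 ≤ K x)
    (hK : Integrable K μ) :
    c * ∫ x, K x ∂μ ≤ ∫ x, g x * K x ∂μ + (|c| + M) * ∫ x in Sᶜ, K x ∂μ := by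
  have hgK : Integrable (fun x ↦ g x * K x) μ := hK.bdd_mul hg (.of_forall hgM)
  have htail : Integrable (fun x ↦ (|c| + M) * Sᶜ.indicator K x) μ :=
    (hK.indicator hS.compl).const_mul _
  rw [← integral_indicator hS.compl, ← integral_const_mul, ← integral_const_mul,
    ← integral_add hgK htail]
  refine integral_mono (hK.const_mul c) (hgK.add htail) fun x ↦ ?_
  by_cases hx : x ∈ S
  · simpa [hx] using mul_le_mul_of_nonneg_right (hcg x hx) (hK_nonneg x)
  · have hcgM : c ≤ g x + (|c| + M) := by linarith [le_abs_self c, neg_le_of_abs_le (hgM x)]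
    simpa [hx, add_mul] using mul_le_mul_of_nonneg_right hcgM (hK_nonneg x)

theorem exists_pos_setIntegral_compl_closedBall_lt {K : ℝ → ℝ} (hK : Integrable K) {ε : ℝ}
    (hε : 0 < ε) : ∃ V > 0, ∫ v in (Metric.closedBall 0 V)ᶜ, K v < ε := by
  have hempty : ⋂ V : ℝ, (Metric.closedBall (0 : ℝ) V)ᶜ = ∅ := by
    refine eq_empty_of_forall_notMem fun v hv ↦ ?_
    simpa using mem_iInter.1 hv |v|
  have htail := tendsto_setIntegral_of_antitone (f := K) (μ := volume)
    (s := fun V : ℝ ↦ (Metric.closedBall 0 V)ᶜ) (fun V ↦ measurableSet_closedBall.compl)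
    (fun V W hVW ↦ compl_subset_compl.2 (Metric.closedBall_subset_closedBall hVW))
    ⟨0, hK.integrableOn⟩
  rw [hempty, setIntegral_empty] at htail
  exact ((eventually_gt_atTop 0).and (htail.eventually_lt_const hε)).exists

theorem eventually_lt_of_tendsto_integral_comp_mul {b K : ℝ → ℝ} {M : ℝ} (hb : Measurable b)
    (hbM : ∀ u, |b u| ≤ M) (hK_nonneg : ∀ v, 0 ≤ K v) (hK : Integrable K) (hK_pos : 0 < ∫ v, K v)
    (havg : ∀ c > 0, Tendsto (fun T ↦ ∫ v, b (c * (T + v)) * K v) atTop (𝓝 0))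
    (hwindow : ∀ ε > 0, ∃ r > 0, ∃ x, ∀ᶠ t in atTop, ∀ w ∈ Metric.closedBall (t + x) r,
      b t - ε ≤ b w) {η : ℝ} (hη : 0 < η) : ∀ᶠ t in atTop, b t < η := by
  -- If `η ≤ b t`, then `η / 2 ≤ b` on a ball of radius `r`, onto which scaling by `r / V` carries
  -- the ball of radius `V` holding almost all the mass of `K`; the average is then not small.
  have hM : 0 ≤ M := (abs_nonneg _).trans (hbM 0)
  obtain ⟨r, hr, x, hwindow⟩ := hwindow (η / 2) (by positivity)
  obtain ⟨V, hV, htail⟩ := exists_pos_setIntegral_compl_closedBall_lt hK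
    (ε := η / 4 * (∫ v, K v) / (η / 2 + M)) (by positivity)
  have hc : 0 < r / V := by positivity
  have hcenter : Tendsto (fun t ↦ (t + x) / (r / V)) atTop atTop :=
    (tendsto_atTop_add_const_right _ x tendsto_id).atTop_div_const hc
  have hsmall : ∀ᶠ t in atTop, ∫ v, b (r / V * ((t + x) / (r / V) + v)) * K v <
      η / 4 * ∫ v, K v :=
    ((havg _ hc).comp hcenter).eventually_lt_const (by positivity)
  filter_upwards [hwindow, hsmall] with t hwindow hsmall
  by_contra! hbt
  have hlower (v) (hv : v ∈ Metric.closedBall 0 V) :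
      η / 2 ≤ b (r / V * ((t + x) / (r / V) + v)) := by
    have hmem : r / V * ((t + x) / (r / V) + v) ∈ Metric.closedBall (t + x) r := by
      rw [mul_add, mul_div_cancel₀ _ hc.ne', add_mem_closedBall_iff_norm, norm_mul,
        Real.norm_of_nonneg hc.le, div_mul_eq_mul_div, div_le_iff₀ hV]
      gcongr
      simpa using hv
    linarith [hwindow _ hmem]
  have hb_scaled : Measurable fun v ↦ b (r / V * ((t + x) / (r / V) + v)) :=
    hb.comp (by fun_prop)
  have hmain := mul_integral_le_integral_mul_add measurableSet_closedBall
    hb_scaled.aestronglyMeasurable (fun v ↦ hbM _) hlower hK_nonneg hK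
  rw [abs_of_pos (by positivity)] at hmain
  rw [lt_div_iff₀' (by positivity)] at htail
  linarith

/-- Slow decrease at infinity in Schmidt's sense, with an additive scale: over windows of some
fixed length `δ`, the function eventually drops by at most `ε`. -/
def SlowlyDecreasing (a : ℝ → ℝ) : Prop :=
  ∀ ε > 0, ∃ δ > 0, ∀ᶠ t in atTop, ∀ w ∈ Icc t (t + δ), a t - ε ≤ a w

theorem SlowlyDecreasing.congr {a b : ℝ → ℝ} (ha : SlowlyDecreasing a) (hab : a =ᶠ[atTop] b) :
    SlowlyDecreasing b := by
  intro ε hε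
  obtain ⟨δ, hδ, hslow⟩ := ha ε hε
  refine ⟨δ, hδ, ?_⟩
  filter_upwards [hslow, eventually_forall_ge_atTop.2 hab] with t hslow hab w hw
  rw [← hab t le_rfl, ← hab w hw.1]
  exact hslow w hw

theorem SlowlyDecreasing.eventually_forall_mem_closedBall_add {a : ℝ → ℝ}
    (ha : SlowlyDecreasing a) : ∀ ε > 0, ∃ r > 0, ∃ x, ∀ᶠ t in atTop,
      ∀ w ∈ Metric.closedBall (t + x) r, a t - ε ≤ a w := by
  intro ε hε
  obtain ⟨δ, hδ, hslow⟩ := ha ε hε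
  refine ⟨δ / 2, by positivity, δ / 2, ?_⟩
  filter_upwards [hslow] with t hslow w hw
  rw [Real.closedBall_eq_Icc] at hw
  exact hslow w ⟨by linarith [hw.1], by linarith [hw.2]⟩

theorem SlowlyDecreasing.eventually_forall_mem_closedBall_sub {a : ℝ → ℝ}
    (ha : SlowlyDecreasing a) : ∀ ε > 0, ∃ r > 0, ∃ x, ∀ᶠ t in atTop,
      ∀ w ∈ Metric.closedBall (t + x) r, -a t - ε ≤ -a w := by
  intro ε hε
  obtain ⟨δ, hδ, hslow⟩ := ha ε hε
  refine ⟨δ / 2, by positivity, -(δ / 2), ?_⟩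
  have htranslate := (tendsto_atTop_add_const_right atTop (-δ) tendsto_id).eventually
    (eventually_forall_ge_atTop.2 hslow)
  filter_upwards [htranslate] with t hslow w hw
  rw [Real.closedBall_eq_Icc] at hw
  have hw_ge : id t + -δ ≤ w := by
    rw [id]
    linarith [hw.1]
  linarith [hslow w hw_ge t ⟨by linarith [hw.2], by linarith [hw.1]⟩]

theorem SlowlyDecreasing.tendsto_zero_of_laplaceTransform_eq {a : ℝ → ℝ} {M : ℝ} {H : ℂ → ℂ}
    (ha_slow : SlowlyDecreasing a) (ha : Measurable a) (hM : ∀ u, 0 < u → |a u| ≤ M)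
    (hH : ContinuousOn H {s | 0 ≤ s.re})
    (haH : ∀ s : ℂ, 0 < s.re → laplaceTransform (fun u ↦ a u) s = H s) :
    Tendsto a atTop (𝓝 0) := by
  obtain ⟨φ, K, hφ, hφ_supp, hφK, hK_nonneg, hK, hK_pos⟩ :=
    exists_hasCompactSupport_fourier_nonneg
  set b : ℝ → ℝ := (Ioi 0).indicator a with hb_def
  have hab : a =ᶠ[atTop] b := by
    filter_upwards [eventually_gt_atTop 0] with t ht
    exact (indicator_of_mem ht a).symm
  have hb : Measurable b := ha.indicator measurableSet_Ioi
  have hbM (u : ℝ) : |b u| ≤ M := by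
    by_cases hu : 0 < u
    · simpa [hb_def, hu] using hM u hu
    · simpa [hb_def, hu] using (abs_nonneg _).trans (hM 1 one_pos)
  have havg (c : ℝ) (hc : 0 < c) : Tendsto (fun T ↦ ∫ v, b (c * (T + v)) * K v) atTop (𝓝 0) :=
    tendsto_integral_indicator_Ioi_comp_mul ha hM hH haH hφ hφ_supp hφK hK hc
  have havg_neg (c : ℝ) (hc : 0 < c) :
      Tendsto (fun T ↦ ∫ v, -b (c * (T + v)) * K v) atTop (𝓝 0) := by
    simpa [integral_neg] using (havg c hc).neg
  have hb_slow := ha_slow.congr hab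
  refine Tendsto.congr' hab.symm (tendsto_order.2 ⟨fun η hη ↦ ?_, fun η hη ↦ ?_⟩)
  · filter_upwards [eventually_lt_of_tendsto_integral_comp_mul hb.neg (by simpa using hbM) hK_nonneg
      hK hK_pos havg_neg hb_slow.eventually_forall_mem_closedBall_sub (neg_pos.2 hη)] with t ht
    exact neg_lt_neg_iff.1 ht
  · exact eventually_lt_of_tendsto_integral_comp_mul hb hbM hK_nonneg hK hK_pos havg
      hb_slow.eventually_forall_mem_closedBall_add hη

/-! ### Partial sums of Dirichlet series -/

theorem integral_Ioi_one_mul_cpow_eq_laplaceTransform (F : ℝ → ℂ) (s : ℂ) :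
    ∫ t in Ioi (1 : ℝ), F t * (t : ℂ) ^ (-(s + 1)) =
      laplaceTransform (fun u ↦ F (Real.exp u)) s := by
  have himage : Real.exp '' Ioi 0 = Ioi 1 := by
    ext x
    refine ⟨fun ⟨u, hu, hux⟩ ↦ hux ▸ Real.one_lt_exp_iff.2 hu, fun hx ↦ ?_⟩
    exact ⟨Real.log x, Real.log_pos hx, Real.exp_log (one_pos.trans hx)⟩
  rw [← himage, integral_image_eq_integral_abs_deriv_smul measurableSet_Ioi
    (fun u _ ↦ (Real.hasDerivAt_exp u).hasDerivWithinAt) Real.exp_injective.injOn]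
  refine setIntegral_congr_fun measurableSet_Ioi fun u _ ↦ ?_
  have hexp_ne : cexp u ≠ 0 := Complex.exp_ne_zero u
  simp only [abs_of_pos (Real.exp_pos u), real_smul, ofReal_exp]
  rw [cpow_def_of_ne_zero hexp_ne, ← ofReal_exp, ← ofReal_log (Real.exp_pos u).le, Real.log_exp,
    ofReal_exp, mul_left_comm, ← Complex.exp_add]
  congr 2
  ring

theorem LSeries_eq_mul_laplaceTransform (f : ℕ → ℂ) {r : ℝ} (hr : 0 ≤ r) {s : ℂ} (hs : r < s.re)
    (hf : (fun n ↦ ∑ k ∈ Finset.Icc 1 n, ‖f k‖) =O[atTop] fun n ↦ (n : ℝ) ^ r) :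
    LSeries f s = s * laplaceTransform (fun u ↦ ∑ k ∈ Finset.Icc 1 ⌊Real.exp u⌋₊, f k) s := by
  rw [LSeries_eq_mul_integral' f hr hs hf,
    integral_Ioi_one_mul_cpow_eq_laplaceTransform fun t ↦ ∑ k ∈ Finset.Icc 1 ⌊t⌋₊, f k]

theorem norm_pow_mul_cexp_neg_mul (n : ℕ) (s : ℂ) {u : ℝ} (hu : 0 ≤ u) :
    ‖(u : ℂ) ^ n * cexp (-s * u)‖ = u ^ (n : ℝ) * Real.exp (-s.re * u) := by
  simp [Complex.norm_exp, abs_of_nonneg hu]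

theorem integrableOn_pow_mul_cexp_neg_mul (n : ℕ) {s : ℂ} (hs : 0 < s.re) :
    IntegrableOn (fun u : ℝ ↦ (u : ℂ) ^ n * cexp (-s * u)) (Ioi 0) := by
  have hreal := integrableOn_rpow_mul_exp_neg_mul_rpow (s := n) (p := 1)
    (by linarith [n.cast_nonneg (α := ℝ)]) one_pos hs
  refine hreal.mono' (by fun_prop) (ae_restrict_of_forall_mem measurableSet_Ioi fun u hu ↦ ?_)
  rw [norm_pow_mul_cexp_neg_mul n s (le_of_lt hu), Real.rpow_one]

theorem tendsto_pow_mul_cexp_neg_mul (n : ℕ) {s : ℂ} (hs : 0 < s.re) :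
    Tendsto (fun u : ℝ ↦ (u : ℂ) ^ n * cexp (-s * u)) atTop (𝓝 0) := by
  rw [tendsto_zero_iff_norm_tendsto_zero]
  refine (tendsto_rpow_mul_exp_neg_mul_atTop_nhds_zero n s.re hs).congr' ?_
  filter_upwards [eventually_ge_atTop 0] with u hu
  exact (norm_pow_mul_cexp_neg_mul n s hu).symm

theorem mul_laplaceTransform_pow_succ (n : ℕ) {s : ℂ} (hs : 0 < s.re) :
    s * laplaceTransform (fun u ↦ (u : ℂ) ^ (n + 1)) s =
      (n + 1) * laplaceTransform (fun u ↦ (u : ℂ) ^ n) s := by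
  have hderiv (u : ℝ) : HasDerivAt (fun u : ℝ ↦ (u : ℂ) ^ (n + 1) * cexp (-s * u))
      ((n + 1) * ((u : ℂ) ^ n * cexp (-s * u)) - s * ((u : ℂ) ^ (n + 1) * cexp (-s * u))) u := by
    have hid : HasDerivAt (fun u : ℝ ↦ (u : ℂ)) 1 u := ofRealCLM.hasDerivAt
    convert! (hid.pow (n + 1)).mul (hid.const_mul (-s)).cexp using 1
    simp only [Pi.pow_apply, add_tsub_cancel_right]
    push_cast
    ring
  have hpow := (integrableOn_pow_mul_cexp_neg_mul n hs).const_mul (n + 1 : ℂ)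
  have hpow_succ := (integrableOn_pow_mul_cexp_neg_mul (n + 1) hs).const_mul s
  have hftc := integral_Ioi_of_hasDerivAt_of_tendsto' (a := 0) (fun u _ ↦ hderiv u)
    (hpow.sub hpow_succ) (tendsto_pow_mul_cexp_neg_mul (n + 1) hs)
  rw [integral_sub hpow hpow_succ, integral_const_mul, integral_const_mul] at hftc
  simp only [laplaceTransform]
  simp only [ofReal_zero, zero_pow n.succ_ne_zero, zero_mul, sub_zero] at hftc
  exact (sub_eq_zero.1 hftc).symm

theorem laplaceTransform_one {s : ℂ} (hs : 0 < s.re) : laplaceTransform (fun _ ↦ 1) s = 1 / s := by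
  simp only [laplaceTransform, one_mul]
  rw [integral_exp_mul_complex_Ioi (by simpa using hs)]
  simp

theorem laplaceTransform_add {a b : ℝ → ℂ} {s : ℂ}
    (ha : IntegrableOn (fun u : ℝ ↦ a u * cexp (-s * u)) (Ioi 0))
    (hb : IntegrableOn (fun u : ℝ ↦ b u * cexp (-s * u)) (Ioi 0)) :
    laplaceTransform (fun u ↦ a u + b u) s = laplaceTransform a s + laplaceTransform b s := by
  simp_rw [laplaceTransform, add_mul]
  exact integral_add ha hb

theorem laplaceTransform_const_mul (c : ℂ) (a : ℝ → ℂ) (s : ℂ) :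
    laplaceTransform (fun u ↦ c * a u) s = c * laplaceTransform a s := by
  simp_rw [laplaceTransform, mul_assoc, integral_const_mul]

theorem laplaceTransform_add_affine {a : ℝ → ℂ} {s : ℂ}
    (ha : IntegrableOn (fun u : ℝ ↦ a u * cexp (-s * u)) (Ioi 0)) (hs : 0 < s.re) (c d : ℂ) :
    laplaceTransform (fun u ↦ a u + (c * u + d)) s =
      laplaceTransform a s + (c / s ^ 2 + d / s) := by
  have hmonomial (e : ℂ) (n : ℕ) :
      IntegrableOn (fun u : ℝ ↦ e * (u : ℂ) ^ n * cexp (-s * u)) (Ioi 0) := by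
    simp_rw [mul_assoc]
    exact (integrableOn_pow_mul_cexp_neg_mul n hs).const_mul e
  have hs_ne : s ≠ 0 := ne_zero_of_re_pos hs
  have hid : laplaceTransform (fun u ↦ (u : ℂ) ^ 1) s = 1 / s ^ 2 := by
    have hrec := mul_laplaceTransform_pow_succ 0 hs
    simp only [pow_zero, laplaceTransform_one hs, zero_add, Nat.cast_zero, one_mul] at hrec
    rw [pow_two, ← div_div, eq_div_iff hs_ne, mul_comm, hrec]
  have haffine := laplaceTransform_add (hmonomial c 1) (hmonomial d 0)
  have hsum := laplaceTransform_add ha (b := fun u ↦ c * (u : ℂ) ^ 1 + d * (u : ℂ) ^ 0) (by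
    simp_rw [add_mul]
    exact (hmonomial c 1).add (hmonomial d 0))
  rw [haffine, laplaceTransform_const_mul, laplaceTransform_const_mul, hid] at hsum
  simpa [laplaceTransform_one hs, div_eq_mul_inv] using hsum

theorem abs_log_floor_sub_log_le {x : ℝ} (hx : 1 ≤ x) :
    |Real.log ⌊x⌋₊ - Real.log x| ≤ Real.log 2 := by
  have hfloor : (1 : ℝ) ≤ ⌊x⌋₊ := mod_cast (Nat.one_le_floor_iff x).2 hx
  have hle : Real.log ⌊x⌋₊ ≤ Real.log x := by gcongr; exact Nat.floor_le (by positivity)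
  have hge : Real.log x ≤ Real.log 2 + Real.log ⌊x⌋₊ := by
    rw [← Real.log_mul two_ne_zero (by positivity)]
    gcongr
    linarith [Nat.lt_floor_add_one x]
  rw [abs_le]
  constructor <;> linarith

theorem slowlyDecreasing_sub_affine {g : ℝ → ℝ} (hg : Monotone g) (c d : ℝ) :
    SlowlyDecreasing fun u ↦ g u - (c * u + d) := by
  intro ε hε
  refine ⟨ε / (|c| + 1), by positivity, .of_forall fun t w hw ↦ ?_⟩
  have hdrop : c * (w - t) ≤ ε := calc
    c * (w - t) ≤ (|c| + 1) * (ε / (|c| + 1)) := by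
      gcongr
      · linarith [hw.1]
      · linarith [le_abs_self c]
      · linarith [hw.2]
    _ = ε := by field_simp
  linarith [hg hw.1]

theorem measurable_sum_floor_exp (f : ℕ → ℝ) :
    Measurable fun u ↦ ∑ k ∈ Finset.Icc 1 ⌊Real.exp u⌋₊, f k :=
  (measurable_of_countable fun n ↦ ∑ k ∈ Finset.Icc 1 n, f k).comp
    (Nat.measurable_floor.comp Real.measurable_exp)

section PartialSums

variable {f : ℕ → ℝ} {c C : ℝ}

theorem isBigO_sum_of_abs_sum_sub_log_le
    (hC : ∀ n, |∑ k ∈ Finset.Icc 1 n, f k - c * Real.log n| ≤ C) {r : ℝ} (hr : 0 < r) :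
    (fun n ↦ ∑ k ∈ Finset.Icc 1 n, f k) =O[atTop] fun n ↦ (n : ℝ) ^ r := by
  have hlog : (fun n : ℕ ↦ c * Real.log n) =O[atTop] fun n ↦ (n : ℝ) ^ r :=
    .const_mul_left
      ((isLittleO_log_rpow_atTop hr).comp_tendsto tendsto_natCast_atTop_atTop).isBigO c
  have hone : (fun _ ↦ (1 : ℝ)) =O[atTop] fun n : ℕ ↦ (n : ℝ) ^ r :=
    ((Asymptotics.isLittleO_const_left.2 (.inr (tendsto_norm_atTop_atTop.comp
      (tendsto_rpow_atTop hr)))).comp_tendsto tendsto_natCast_atTop_atTop).isBigO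
  have hdiff : (fun n : ℕ ↦ ∑ k ∈ Finset.Icc 1 n, f k - c * Real.log n) =O[atTop]
      fun _ ↦ (1 : ℝ) :=
    .of_bound C (.of_forall fun n ↦ by simpa using hC n)
  simpa using (hdiff.trans hone).add hlog

theorem abs_sum_floor_exp_sub_affine_le
    (hC : ∀ n, |∑ k ∈ Finset.Icc 1 n, f k - c * Real.log n| ≤ C) (d : ℝ) {u : ℝ} (hu : 0 ≤ u) :
    |∑ k ∈ Finset.Icc 1 ⌊Real.exp u⌋₊, f k - (c * u + d)| ≤ C + |c| * Real.log 2 + |d| := by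
  set N := ⌊Real.exp u⌋₊
  have hfloor : |Real.log N - u| ≤ Real.log 2 := by
    simpa using abs_log_floor_sub_log_le (Real.one_le_exp hu)
  calc |∑ k ∈ Finset.Icc 1 N, f k - (c * u + d)|
      = |(∑ k ∈ Finset.Icc 1 N, f k - c * Real.log N) + c * (Real.log N - u) + -d| := by
        congr 1
        ring
    _ ≤ |∑ k ∈ Finset.Icc 1 N, f k - c * Real.log N| + |c * (Real.log N - u)| + |-d| :=
        abs_add_three _ _ _
    _ ≤ C + |c| * Real.log 2 + |d| := by
        rw [abs_mul, abs_neg]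
        gcongr
        exact hC N

theorem mul_laplaceTransform_sum_floor_exp_sub_affine (hf : ∀ n, 0 ≤ f n)
    (hC : ∀ n, |∑ k ∈ Finset.Icc 1 n, f k - c * Real.log n| ≤ C) (d : ℝ) {s : ℂ} (hs : 0 < s.re) :
    s * laplaceTransform
        (fun u ↦ (∑ k ∈ Finset.Icc 1 ⌊Real.exp u⌋₊, f k - (c * u + d) : ℝ)) s =
      LSeries (fun n ↦ f n) s - (c / s + d) := by
  have hs_ne : s ≠ 0 := ne_zero_of_re_pos hs
  have ha : Measurable fun u ↦ ∑ k ∈ Finset.Icc 1 ⌊Real.exp u⌋₊, f k - (c * u + d) :=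
    (measurable_sum_floor_exp f).sub (by fun_prop)
  have hint := integrableOn_mul_cexp_neg_mul ha.complex_ofReal.aestronglyMeasurable
    (fun u hu ↦ (norm_real _).trans_le (abs_sum_floor_exp_sub_affine_le hC d (le_of_lt hu))) hs
  have haffine := laplaceTransform_add_affine hint hs c d
  have hLSeries := LSeries_eq_mul_laplaceTransform (fun n ↦ (f n : ℂ)) (half_pos hs).le
    (half_lt_self hs) (by simpa [abs_of_nonneg, hf] using
      isBigO_sum_of_abs_sum_sub_log_le hC (half_pos hs))
  have hmul : s * (c / s ^ 2 + d / s) = c / s + d := by field_simp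
  simp only [ofReal_sub, ofReal_add, ofReal_mul, ofReal_sum, sub_add_cancel] at haffine ⊢
  rw [hLSeries, haffine, mul_add, hmul, add_sub_cancel_right]

theorem tendsto_sum_sub_log_of_LSeries_eq {d : ℝ} {H : ℂ → ℂ} (hf : ∀ n, 0 ≤ f n)
    (hC : ∀ n, |∑ k ∈ Finset.Icc 1 n, f k - c * Real.log n| ≤ C)
    (hH : ContinuousOn H {s | 0 ≤ s.re})
    (hL : ∀ s : ℂ, 0 < s.re → LSeries (fun n ↦ f n) s = c / s + d + s * H s) :
    Tendsto (fun x ↦ ∑ k ∈ Finset.Icc 1 ⌊x⌋₊, f k - c * Real.log x) atTop (𝓝 d) := by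
  have hmono : Monotone fun n ↦ ∑ k ∈ Finset.Icc 1 n, f k := fun m n hmn ↦
    Finset.sum_le_sum_of_subset_of_nonneg (Finset.Icc_subset_Icc_right hmn) fun k _ _ ↦ hf k
  have hslow := slowlyDecreasing_sub_affine
    (hmono.comp (Nat.floor_mono.comp Real.exp_monotone)) c d
  have hlaplace (s : ℂ) (hs : 0 < s.re) : laplaceTransform
      (fun u ↦ (∑ k ∈ Finset.Icc 1 ⌊Real.exp u⌋₊, f k - (c * u + d) : ℝ)) s = H s := by
    refine mul_left_cancel₀ (ne_zero_of_re_pos hs) ?_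
    rw [mul_laplaceTransform_sum_floor_exp_sub_affine hf hC d hs, hL s hs, add_sub_cancel_left]
  have hlim := (hslow.tendsto_zero_of_laplaceTransform_eq
    ((measurable_sum_floor_exp f).sub (by fun_prop))
    (fun u hu ↦ abs_sum_floor_exp_sub_affine_le hC d (le_of_lt hu)) hH hlaplace).comp
    Real.tendsto_log_atTop
  rw [← zero_add d]
  refine (hlim.add_const d).congr' ?_
  filter_upwards [eventually_gt_atTop 0] with x hx
  simp only [Function.comp_apply, Real.exp_log hx]
  ring

end PartialSums

/-! ### The sum of `Λ(n) / n` -/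

theorem LSeries_div_natCast (f : ℕ → ℂ) (s : ℂ) :
    LSeries (fun n ↦ f n / n) s = LSeries f (s + 1) := by
  refine tsum_congr fun n ↦ ?_
  obtain rfl | hn := eq_or_ne n 0
  · simp
  · rw [LSeries.term_of_ne_zero hn, LSeries.term_of_ne_zero hn,
      cpow_add _ _ (Nat.cast_ne_zero.2 hn), cpow_one, div_div, mul_comm]

theorem riemannZeta₁_ne_zero_of_one_le_re {s : ℂ} (hs : 1 ≤ s.re) : riemannZeta₁ s ≠ 0 := by
  obtain rfl | hs_ne := eq_or_ne s 1
  · simp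
  · have hzeta := riemannZeta_ne_zero_of_one_le_re hs
    rw [riemannZeta_eq_inv_sub_mul hs_ne] at hzeta
    exact right_ne_zero_of_mul hzeta

theorem LSeries_vonMangoldt_eq_inv_sub_logDeriv_riemannZeta₁ {s : ℂ} (hs : 1 < s.re) :
    LSeries (fun n ↦ (Λ n : ℂ)) s = (s - 1)⁻¹ - logDeriv riemannZeta₁ s := by
  have hs_ne : s ≠ 1 := by
    rintro rfl
    simp at hs
  have hsub_ne : s - 1 ≠ 0 := sub_ne_zero.2 hs_ne
  have hzeta₁_ne := riemannZeta₁_ne_zero_of_one_le_re hs.le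
  rw [ArithmeticFunction.LSeries_vonMangoldt_eq_deriv_riemannZeta_div hs,
    deriv_riemannZeta_eq_neg_inv_sub_sq_mul_add hs_ne, riemannZeta_eq_inv_sub_mul hs_ne,
    logDeriv_apply]
  field_simp
  ring

theorem differentiableAt_logDeriv_riemannZeta₁ {s : ℂ} (hs : 1 ≤ s.re) :
    DifferentiableAt ℂ (logDeriv riemannZeta₁) s :=
  differentiable_riemannZeta₁.deriv.differentiableAt.div
    differentiable_riemannZeta₁.differentiableAt (riemannZeta₁_ne_zero_of_one_le_re hs)

theorem LSeries_vonMangoldt_div_eq {s : ℂ} (hs : 0 < s.re) :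
    LSeries (fun n ↦ (Λ n / n : ℝ)) s = 1 / s + (-Real.eulerMascheroniConstant : ℝ) +
      s * -dslope (logDeriv riemannZeta₁) 1 (s + 1) := by
  have hslope := sub_smul_dslope (logDeriv riemannZeta₁) 1 (s + 1)
  have hone : logDeriv riemannZeta₁ 1 = Real.eulerMascheroniConstant := by
    simp [logDeriv_apply, deriv_riemannZeta₁_one]
  rw [hone, add_sub_cancel_right, smul_eq_mul] at hslope
  simp only [ofReal_div, ofReal_natCast, ofReal_neg]
  rw [LSeries_div_natCast fun n ↦ (Λ n : ℂ),
    LSeries_vonMangoldt_eq_inv_sub_logDeriv_riemannZeta₁ (by simpa using hs), add_sub_cancel_right,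
    mul_neg, hslope]
  ring

theorem continuousOn_dslope_logDeriv_riemannZeta₁ :
    ContinuousOn (dslope (logDeriv riemannZeta₁) 1) {s | 1 ≤ s.re} := by
  intro s hs
  refine ContinuousAt.continuousWithinAt ?_
  obtain rfl | hs_ne := eq_or_ne s 1
  · exact continuousAt_dslope_same.2 (differentiableAt_logDeriv_riemannZeta₁ hs)
  · exact (continuousAt_dslope_of_ne hs_ne).2
      (differentiableAt_logDeriv_riemannZeta₁ hs).continuousAt

theorem sum_vonMangoldt_mul_div_eq_log_factorial (n : ℕ) :
    ∑ k ∈ Finset.Icc 1 n, Λ k * (n / k : ℕ) = Real.log n.factorial := by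
  have hlog : Real.log n.factorial = ∑ m ∈ Finset.Icc 1 n, Real.log m := by
    rw [← Finset.prod_Ico_id_eq_factorial, Finset.Ico_add_one_right_eq_Icc, Nat.cast_prod,
      Real.log_prod]
    intro m hm
    exact Nat.cast_ne_zero.2 (Nat.one_le_iff_ne_zero.1 (Finset.mem_Icc.1 hm).1)
  have hconv := ArithmeticFunction.sum_Ioc_mul_zeta_eq_sum Λ n
  rw [ArithmeticFunction.vonMangoldt_mul_zeta] at hconv
  exact hconv.symm.trans hlog.symm

theorem abs_log_factorial_sub_mul_log_le (n : ℕ) :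
    |Real.log n.factorial - n * Real.log n| ≤ n := by
  have hle : Real.log n.factorial ≤ n * Real.log n := by
    rw [← Real.log_pow]
    exact Real.log_le_log (by positivity) (mod_cast n.factorial_le_pow)
  have hge : n * Real.log n - n ≤ Real.log n.factorial := by
    obtain rfl | hn := eq_or_ne n 0
    · simp
    · have hlog_two_pi : 0 ≤ Real.log (2 * Real.pi) :=
        Real.log_nonneg (by linarith [Real.pi_gt_three])
      linarith [Stirling.le_log_factorial_stirling hn, Real.log_natCast_nonneg n]
  rw [abs_le]
  constructor <;> linarith [n.cast_nonneg (α := ℝ)]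

theorem abs_mul_sum_div_sub_sum_mul_div_le (f : ℕ → ℝ) (n : ℕ) :
    |n * ∑ k ∈ Finset.Icc 1 n, f k / k - ∑ k ∈ Finset.Icc 1 n, f k * (n / k : ℕ)| ≤
      ∑ k ∈ Finset.Icc 1 n, |f k| := by
  have hfloor (k : ℕ) : |(n / k : ℝ) - (n / k : ℕ)| ≤ 1 := by
    simpa [Nat.floor_div_natCast] using Nat.abs_sub_floor_le (a := (n / k : ℝ)) (by positivity)
  rw [Finset.mul_sum, ← Finset.sum_sub_distrib]
  refine (Finset.abs_sum_le_sum_abs _ _).trans (Finset.sum_le_sum fun k _ ↦ ?_)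
  calc |n * (f k / k) - f k * (n / k : ℕ)| = |f k| * |(n / k : ℝ) - (n / k : ℕ)| := by
        rw [← abs_mul]
        ring_nf
    _ ≤ |f k| := mul_le_of_le_one_right (abs_nonneg _) (hfloor k)

theorem abs_sum_vonMangoldt_div_sub_log_le (n : ℕ) :
    |∑ k ∈ Finset.Icc 1 n, Λ k / k - Real.log n| ≤ Real.log 4 + 5 := by
  obtain rfl | hn := n.eq_zero_or_pos
  · simpa using by positivity
  have hn : (0 : ℝ) < n := Nat.cast_pos.2 hn
  have hpsi : ∑ k ∈ Finset.Icc 1 n, Λ k ≤ (Real.log 4 + 4) * n := by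
    simpa [Chebyshev.psi] using! Chebyshev.psi_le_const_mul_self hn.le
  have hfloor := abs_mul_sum_div_sub_sum_mul_div_le Λ n
  simp only [sum_vonMangoldt_mul_div_eq_log_factorial,
    abs_of_nonneg ArithmeticFunction.vonMangoldt_nonneg] at hfloor
  refine le_of_mul_le_mul_left ?_ hn
  calc n * |∑ k ∈ Finset.Icc 1 n, Λ k / k - Real.log n|
      = |n * ∑ k ∈ Finset.Icc 1 n, Λ k / k - n * Real.log n| := by
        rw [← mul_sub, abs_mul, Nat.abs_cast]
    _ ≤ |n * ∑ k ∈ Finset.Icc 1 n, Λ k / k - Real.log n.factorial| +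
        |Real.log n.factorial - n * Real.log n| := abs_sub_le _ _ _
    _ ≤ (Real.log 4 + 4) * n + n :=
        add_le_add (hfloor.trans hpsi) (abs_log_factorial_sub_mul_log_le n)
    _ = n * (Real.log 4 + 5) := by ring

theorem tendsto_sum_vonMangoldt_div_sub_log :
    Tendsto (fun x : ℝ ↦ ∑ k ∈ Finset.Icc 1 ⌊x⌋₊, Λ k / k - Real.log x) atTop
      (𝓝 (-Real.eulerMascheroniConstant)) := by
  have hH : ContinuousOn (fun s ↦ -dslope (logDeriv riemannZeta₁) 1 (s + 1)) {s | 0 ≤ s.re} :=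
    (continuousOn_dslope_logDeriv_riemannZeta₁.comp (by fun_prop) fun s hs ↦ by
      simpa using hs).neg
  simpa only [one_mul] using tendsto_sum_sub_log_of_LSeries_eq (c := 1)
    (fun n ↦ div_nonneg ArithmeticFunction.vonMangoldt_nonneg n.cast_nonneg)
    (by simpa only [one_mul] using abs_sum_vonMangoldt_div_sub_log_le) hH
    fun s hs ↦ by simpa only [ofReal_one] using LSeries_vonMangoldt_div_eq hs

/-! ### Removing the proper prime powers -/

/-- The terms `Λ(n) / n` with the primes left out, so that only the proper prime powers
`n = p ^ k`, `2 ≤ k`, contribute. -/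
noncomputable def properPrimePowerTerm (n : ℕ) : ℝ :=
  (if n.Prime then 0 else Λ n) / n

theorem summable_properPrimePowerTerm : Summable properPrimePowerTerm := by
  refine (ArithmeticFunction.vonMangoldt.summable_residueClass_non_primes_div
    (q := 1) 0).congr fun n ↦ ?_
  have hn : (n : ZMod 1) = 0 := Subsingleton.elim _ _
  simp [properPrimePowerTerm, ArithmeticFunction.vonMangoldt.residueClass, Set.indicator, hn]

theorem properPrimePowerTerm_prime (p : Nat.Primes) : properPrimePowerTerm p = 0 := by
  simp [properPrimePowerTerm, p.2]

theorem properPrimePowerTerm_prime_pow (p : Nat.Primes) (k : ℕ) :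
    properPrimePowerTerm (p ^ (k + 2)) = Real.log p / (p : ℝ) ^ (k + 2) := by
  rw [properPrimePowerTerm, if_neg (Nat.Prime.not_prime_pow (Nat.le_add_left 2 k)),
    ArithmeticFunction.vonMangoldt_apply_pow (k + 1).succ_ne_zero,
    ArithmeticFunction.vonMangoldt_apply_prime p.2, Nat.cast_pow]

theorem support_properPrimePowerTerm_subset :
    Function.support properPrimePowerTerm ⊆ {n | IsPrimePow n} := by
  intro n hn
  contrapose! hn
  simp [properPrimePowerTerm, ArithmeticFunction.vonMangoldt_eq_zero_iff.2 hn]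

theorem properPrimePowerTerm_eq_sub (n : ℕ) :
    properPrimePowerTerm n = Λ n / n - if n.Prime then Real.log n / n else 0 := by
  rw [properPrimePowerTerm]
  split_ifs with hn
  · simp [ArithmeticFunction.vonMangoldt_apply_prime hn]
  · simp

theorem injective_primes_pow_add_two :
    Function.Injective fun pk : Nat.Primes × ℕ ↦ (pk.1 : ℕ) ^ (pk.2 + 2) :=
  (Subtype.val_injective.comp Nat.Primes.prodNatEquiv.injective).comp
    (Function.injective_id.prodMap (add_left_injective 1))

theorem summable_log_div_primes_pow : Summable fun pk : Nat.Primes × ℕ ↦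
    Real.log pk.1 / (pk.1 : ℝ) ^ (pk.2 + 2) :=
  (summable_properPrimePowerTerm.comp_injective injective_primes_pow_add_two).congr fun pk ↦
    properPrimePowerTerm_prime_pow pk.1 pk.2

theorem tsum_properPrimePowerTerm :
    ∑' n, properPrimePowerTerm n =
      ∑' (k : ℕ) (p : Nat.Primes), Real.log p / (p : ℝ) ^ (k + 2) := by
  rw [tsum_eq_tsum_primes_add_tsum_primes_of_support_subset_prime_powers
    summable_properPrimePowerTerm support_properPrimePowerTerm_subset]
  simp only [properPrimePowerTerm_prime, tsum_zero, zero_add, properPrimePowerTerm_prime_pow]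
  exact summable_log_div_primes_pow.tsum_comm.symm

theorem RFun_eq_sub_sum_properPrimePowerTerm (x : ℝ) :
    RFun x = (∑ k ∈ Finset.Icc 1 ⌊x⌋₊, Λ k / k - Real.log x) -
      ∑ k ∈ Finset.range (⌊x⌋₊ + 1), properPrimePowerTerm k := by
  have hrange : ∑ k ∈ Finset.Icc 1 ⌊x⌋₊, Λ k / k = ∑ k ∈ Finset.range (⌊x⌋₊ + 1), Λ k / k := by
    rw [Finset.range_eq_Ico, Finset.sum_eq_sum_Ico_succ_bot (Nat.succ_pos _)]
    simp [Finset.Ico_add_one_right_eq_Icc]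
  simp_rw [properPrimePowerTerm_eq_sub]
  rw [RFun, hrange, Finset.sum_sub_distrib, Finset.sum_filter]
  ring

/-- `R(x)` converges as `x → ∞`, with limit
`−γ − ∑_{k ≥ 2} ∑_{p prime} (log p)/p^k`; the double series converges absolutely. -/
theorem RFun_tendsto_neg_gamma_sub :
    Summable (fun kp : ℕ × Nat.Primes =>
      Real.log (kp.2 : ℕ) / ((kp.2 : ℕ) : ℝ) ^ (kp.1 + 2)) ∧
    Filter.Tendsto RFun Filter.atTop
      (nhds (-Real.eulerMascheroniConstant -
        ∑' (k : ℕ) (p : Nat.Primes), Real.log (p : ℕ) / ((p : ℕ) : ℝ) ^ (k + 2))) := by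
  refine ⟨summable_log_div_primes_pow.prod_symm, ?_⟩
  have hpowers := summable_properPrimePowerTerm.hasSum.tendsto_sum_nat.comp
    ((tendsto_add_atTop_nat 1).comp (tendsto_nat_floor_atTop (α := ℝ)))
  rw [tsum_properPrimePowerTerm] at hpowers
  refine (tendsto_sum_vonMangoldt_div_sub_log.sub hpowers).congr fun x ↦ ?_
  exact (RFun_eq_sub_sum_properPrimePowerTerm x).symm
end

section
/- There is a constant C such that for all real x ≥ 2, |Σ_{p ≤ x, p prime} (log p)/p − log x| ≤ C (Mertens' first theorem: R(x) is bounded). -/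
/-!
Legendre's formula expands `log n!` as the sum of `v_p(n!) * log p` over the primes `p ≤ n`, where
`n / p - 1 ≤ v_p(n!) ≤ n / (p - 1)`. Replacing `v_p(n!)` by `n / p` changes this sum by `O(n)` only:
from below because `∑_{p ≤ n} log p = O(n)` (Chebyshev), from above because
`n / (p - 1) = n / p + n / (p * (p - 1))` and `∑ log k / (k * (k - 1))` converges. Comparing with
`log n! = n * log n + O(n)` and dividing by `n` yields the estimate at integers, and
`log x - log ⌊x⌋` is bounded.
-/

section

open Real
open scoped Nat

theorem log_factorial_eq_sum_primesLE (n : ℕ) :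
    log n ! = ∑ p ∈ n.primesLE, (n !).factorization p * log p := by
  rw [log_nat_eq_sum_factorization]
  refine Finsupp.sum_of_support_subset _ (fun p hp ↦ ?_) _ (by simp)
  have hprime : p.Prime := Nat.prime_of_mem_primeFactors hp
  exact Nat.mem_primesLE.2
    ⟨hprime.dvd_factorial.1 (Nat.dvd_of_mem_primeFactors hp), hprime⟩

theorem log_factorial_le_mul_log (n : ℕ) : log n ! ≤ n * log n := by
  rw [← log_pow]
  exact log_le_log (by positivity) (mod_cast n.factorial_le_pow)

theorem mul_log_sub_le_log_factorial (n : ℕ) : n * log n - n ≤ log n ! := by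
  rcases eq_or_ne n 0 with rfl | hn
  · simp
  have hlog : log ((n : ℝ) ^ n / n !) ≤ n :=
    (log_le_iff_le_exp (by positivity)).2 (pow_div_factorial_le_exp n n.cast_nonneg n)
  rw [log_div (by positivity) (by positivity), log_pow] at hlog
  linarith

theorem div_le_factorization_factorial {p : ℕ} (hp : p.Prime) (n : ℕ) :
    n / p ≤ (n !).factorization p := calc
  n / p ≤ (p * (n / p))!.factorization p := by
    rw [Nat.factorization_factorial_mul hp]
    exact Nat.le_add_left _ _
  _ ≤ (n !).factorization p :=
    Nat.factorization_le_factorization_of_dvd_right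
      (Nat.factorial_dvd_factorial (Nat.mul_div_le n p))
      (Nat.factorial_ne_zero _) (Nat.factorial_ne_zero _)

theorem div_sub_one_le_factorization_factorial {p : ℕ} (hp : p.Prime) (n : ℕ) :
    (n : ℝ) / p - 1 ≤ (n !).factorization p := calc
  (n : ℝ) / p - 1 ≤ (n / p : ℕ) := by
    rw [← Nat.floor_div_eq_div (K := ℝ)]
    exact (Nat.sub_one_lt_floor _).le
  _ ≤ (n !).factorization p := mod_cast div_le_factorization_factorial hp n

theorem cast_factorization_factorial_le_div_pred {p : ℕ} (hp : p.Prime) (n : ℕ) :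
    ((n !).factorization p : ℝ) ≤ n / (p - 1) := calc
  ((n !).factorization p : ℝ) ≤ (n / (p - 1) : ℕ) :=
    mod_cast Nat.factorization_factorial_le_div_pred hp n
  _ ≤ n / (p - 1 : ℕ) := Nat.cast_div_le
  _ = n / (p - 1) := by rw [Nat.cast_pred hp.pos]

theorem log_div_mul_sub_one_le_rpow {x : ℝ} (hx : 2 ≤ x) :
    log x / (x * (x - 1)) ≤ 4 * x ^ (-(3 / 2) : ℝ) := by
  have hx0 : 0 < x := by linarith
  calc log x / (x * (x - 1))
      ≤ (x ^ (1 / 2 : ℝ) / (1 / 2)) / (x ^ 2 / 2) := by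
        gcongr
        · exact log_le_rpow_div hx0.le one_half_pos
        · nlinarith
    _ = 4 * (x ^ (1 / 2 : ℝ) / x ^ (2 : ℝ)) := by
        rw [rpow_two]
        ring
    _ = 4 * x ^ (-(3 / 2) : ℝ) := by
        rw [← rpow_sub hx0]
        norm_num

theorem log_natCast_div_mul_sub_one_nonneg (k : ℕ) : 0 ≤ log k / (k * (k - 1)) := by
  rcases k with _ | k
  · simp
  · exact div_nonneg (log_natCast_nonneg _) (by push_cast; ring_nf; positivity)

theorem summable_log_div_mul_sub_one :
    Summable fun k : ℕ ↦ log k / (k * (k - 1)) := by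
  have hbound : Summable fun k : ℕ ↦ 4 * (k : ℝ) ^ (-(3 / 2) : ℝ) :=
    (summable_nat_rpow.2 (by norm_num)).mul_left 4
  refine hbound.of_norm_bounded_eventually_nat ?_
  filter_upwards [Filter.eventually_ge_atTop 2] with k hk
  rw [norm_of_nonneg (log_natCast_div_mul_sub_one_nonneg k)]
  exact log_div_mul_sub_one_le_rpow (mod_cast hk)

theorem sum_primesLE_log_div_le {n : ℕ} (hn : n ≠ 0) :
    ∑ p ∈ n.primesLE, log p / p ≤ log n + log 4 := by
  have hn0 : (0 : ℝ) < n := by positivity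
  have hlegendre : n * ∑ p ∈ n.primesLE, log p / p - Chebyshev.theta n ≤ log n ! := by
    rw [Chebyshev.theta_eq_sum_primesLE_log, log_factorial_eq_sum_primesLE, Finset.mul_sum,
      ← Finset.sum_sub_distrib]
    refine Finset.sum_le_sum fun p hp ↦ ?_
    calc n * (log p / p) - log p = (n / p - 1) * log p := by ring
      _ ≤ (n !).factorization p * log p := by
        gcongr
        exact div_sub_one_le_factorization_factorial (Nat.prime_of_mem_primesLE hp) n
  have htheta : Chebyshev.theta n ≤ log 4 * n := Chebyshev.theta_le_log4_mul_x hn0.le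
  have hfactorial := log_factorial_le_mul_log n
  refine le_of_mul_le_mul_left ?_ hn0
  linarith

theorem log_le_sum_primesLE_log_div_add {n : ℕ} (hn : n ≠ 0) :
    log n ≤ ∑ p ∈ n.primesLE, log p / p + ∑' k : ℕ, log k / (k * (k - 1)) + 1 := by
  have hn0 : (0 : ℝ) < n := by positivity
  have hlegendre : log n ! ≤
      n * (∑ p ∈ n.primesLE, log p / p + ∑ p ∈ n.primesLE, log p / (p * (p - 1))) := by
    rw [log_factorial_eq_sum_primesLE, ← Finset.sum_add_distrib, Finset.mul_sum]
    refine Finset.sum_le_sum fun p hp ↦ ?_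
    have hprime := Nat.prime_of_mem_primesLE hp
    have hp1 : (p : ℝ) - 1 ≠ 0 := sub_ne_zero.2 (mod_cast hprime.ne_one)
    have hp0 : (p : ℝ) ≠ 0 := mod_cast hprime.ne_zero
    calc (n !).factorization p * log p ≤ n / (p - 1) * log p := by
          gcongr
          exact cast_factorization_factorial_le_div_pred hprime n
      _ = n * (log p / p + log p / (p * (p - 1))) := by
          field_simp
          ring
  have htail : ∑ p ∈ n.primesLE, log p / (p * (p - 1)) ≤ ∑' k : ℕ, log k / (k * (k - 1)) :=
    summable_log_div_mul_sub_one.sum_le_tsum _ fun k _ ↦ log_natCast_div_mul_sub_one_nonneg k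
  have hfactorial := mul_log_sub_le_log_factorial n
  refine le_of_mul_le_mul_left ?_ hn0
  linarith [mul_le_mul_of_nonneg_left htail hn0.le]

theorem log_le_log_floor_add_log_two {x : ℝ} (hx : 1 ≤ x) :
    log x ≤ log ⌊x⌋₊ + log 2 := by
  have hfloor : (1 : ℝ) ≤ ⌊x⌋₊ := mod_cast Nat.floor_pos.2 hx
  rw [← log_mul (by positivity) two_ne_zero]
  exact log_le_log (by positivity) (by linarith [Nat.lt_floor_add_one x])

end

/-- Mertens' first theorem: there is a constant `C` such that
`|∑_{p ≤ x, p prime} (log p)/p − log x| ≤ C` for all real `x ≥ 2`. -/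
theorem mertens_first :
    ∃ C : ℝ, ∀ x : ℝ, 2 ≤ x →
      |(∑ p ∈ (Finset.range (⌊x⌋₊ + 1)).filter Nat.Prime, Real.log p / p)
        - Real.log x| ≤ C := by
  refine ⟨∑' k : ℕ, Real.log k / (k * (k - 1)) + 1 + Real.log 4, fun x hx ↦ ?_⟩
  have hfloor : ⌊x⌋₊ ≠ 0 := (Nat.floor_pos.2 (by linarith)).ne'
  have hupper := sum_primesLE_log_div_le hfloor
  have hlower := log_le_sum_primesLE_log_div_add hfloor
  have hlog_floor : Real.log ⌊x⌋₊ ≤ Real.log x :=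
    Real.log_le_log (by positivity) (Nat.floor_le (by linarith))
  have hlog := log_le_log_floor_add_log_two (x := x) (by linarith)
  have htsum : 0 ≤ ∑' k : ℕ, Real.log k / (k * (k - 1)) :=
    tsum_nonneg log_natCast_div_mul_sub_one_nonneg
  have hlog24 : Real.log 2 ≤ Real.log 4 := Real.log_le_log two_pos (by norm_num)
  rw [← Nat.primesLE_eq_filter_range, abs_le]
  constructor <;> linarith
end
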